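/- Let ρ > 0 and σ > 0, define m(λ) = ρσ · ∫_0^∞ ln(1 + sinh²(λ/(2ρ))·erfc(η)·erfc(−η)) dη and φ_q(ξ) = sup_{λ∈ℝ} (λξ − m(λ)). Then lim_{ξ→0} φ_q(ξ)/ξ² = ρ√(2π)/(2σ). Equivalently, the quenched variance of the rescaled tracer position is σ/(ρ√(2π)), smaller by a factor √2 than the annealed variance σ/(ρ√π). -/

import Mathlib

open MeasureTheory Real Filter Topology

/-- The complementary error function `erfc(x) = (2/√π) ∫_x^∞ e^{−u²} du`. -/
noncomputable def erfc (x : ℝ) : ℝ := (2 / Real.sqrt π) * ∫ u in Set.Ioi x, Real.exp (-u ^ 2)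

/-- The quenched cumulant generating function per unit `√t`:
`m(λ) = ρσ ∫_0^∞ ln(1 + sinh²(λ/(2ρ))·erfc(η)·erfc(−η)) dη`. -/
noncomputable def mq (ρ σ l : ℝ) : ℝ :=
  ρ * σ * ∫ η in Set.Ioi (0 : ℝ),
    Real.log (1 + Real.sinh (l / (2 * ρ)) ^ 2 * erfc η * erfc (-η))

/-- The quenched large deviation function `φ_q(ξ) = sup_λ (λξ − m(λ))`. -/
noncomputable def φq (ρ σ ξ : ℝ) : ℝ := ⨆ l : ℝ, (l * ξ - mq ρ σ l)

/-!
The cumulant generating function `m` is convex, since each `log (1 + a sinh² x)` with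
`0 ≤ a ≤ 2` is, and `m(λ) ∼ κλ²/2` as `λ → 0`, where dominated convergence and
`∫₀^∞ erfc(η) erfc(-η) dη = √(2/π)` give the quenched variance `κ = σ/(ρ√(2π))`. For a convex
function the behaviour at `0` alone governs its Legendre transform near `0`: convexity turns the
quadratic lower bound near `0` into linear growth elsewhere, so that for small `ξ` only small `λ`
compete in the supremum. Hence `φ_q(ξ) ∼ ξ²/(2κ)`.
-/

lemma tendsto_div_const_nhdsNE_zero {c : ℝ} (hc : c ≠ 0) :
    Tendsto (fun x => x / c) (𝓝[≠] 0) (𝓝[≠] 0) := by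
  refine tendsto_nhdsWithin_iff.2 ⟨?_, ?_⟩
  · exact (Continuous.tendsto' (f := fun x => x / c) (by fun_prop) 0 0 (zero_div c)).mono_left
      nhdsWithin_le_nhds
  · filter_upwards [self_mem_nhdsWithin] with x hx
    exact div_ne_zero hx hc

lemma tendsto_sinh_div : Tendsto (fun x => sinh x / x) (𝓝[≠] 0) (𝓝 1) := by
  have h := hasDerivAt_iff_tendsto_slope.1 (hasDerivAt_sinh 0)
  rw [cosh_zero] at h
  exact h.congr fun x => by simp [slope_def_field]

lemma div_mul_norm_le_of_convexOn {E : Type*} [NormedAddCommGroup E] [NormedSpace ℝ E]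
    {f : E → ℝ} {b δ : ℝ} (hf : ConvexOn ℝ Set.univ f) (hf0 : f 0 ≤ 0) (hδ : 0 < δ)
    (hsphere : ∀ x, ‖x‖ = δ → b ≤ f x) {x : E} (hx : δ ≤ ‖x‖) :
    b / δ * ‖x‖ ≤ f x := by
  have hx0 : 0 < ‖x‖ := hδ.trans_le hx
  have ht1 : δ / ‖x‖ ≤ 1 := (div_le_one hx0).2 hx
  have hnorm : ‖(δ / ‖x‖) • x‖ = δ := by
    rw [norm_smul, norm_of_nonneg (by positivity), div_mul_cancel₀ _ hx0.ne']
  have hscale : f ((δ / ‖x‖) • x) ≤ δ / ‖x‖ * f x := by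
    have h := hf.2 (Set.mem_univ x) (Set.mem_univ 0) (show 0 ≤ δ / ‖x‖ by positivity)
      (sub_nonneg.2 ht1) (add_sub_cancel _ 1)
    rw [smul_zero, add_zero, smul_eq_mul, smul_eq_mul] at h
    linarith [mul_nonpos_of_nonneg_of_nonpos (sub_nonneg.2 ht1) hf0]
  refine le_of_mul_le_mul_left ?_ (show 0 < δ / ‖x‖ by positivity)
  calc δ / ‖x‖ * (b / δ * ‖x‖) = b := by field_simp
    _ ≤ f ((δ / ‖x‖) • x) := hsphere _ hnorm
    _ ≤ δ / ‖x‖ * f x := hscale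

section LegendreTransform

/-- The Legendre transform `f*(ξ) = sup_l (l ξ - f l)` of a function on the line, with the real
supremum: the value is `0` where the family is unbounded above. -/
noncomputable def legendreTransform (f : ℝ → ℝ) (ξ : ℝ) : ℝ := ⨆ l : ℝ, (l * ξ - f l)

variable {f : ℝ → ℝ} {c δ κ : ℝ}

lemma legendreTransform_le {ξ b : ℝ} (h : ∀ l, l * ξ - f l ≤ b) : legendreTransform f ξ ≤ b :=
  ciSup_le h

lemma le_legendreTransform {ξ b : ℝ} (h : ∀ l, l * ξ - f l ≤ b) (l : ℝ) :
    l * ξ - f l ≤ legendreTransform f ξ :=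
  le_ciSup (f := fun l => l * ξ - f l) ⟨b, Set.forall_mem_range.2 h⟩ l

lemma mul_sub_le_of_convexOn_of_quadratic_le (hf : ConvexOn ℝ Set.univ f) (hf0 : f 0 ≤ 0)
    (hc : 0 < c) (hδ : 0 < δ) (hquad : ∀ l, |l| ≤ δ → c * l ^ 2 ≤ f l) {ξ : ℝ}
    (hξ : |ξ| ≤ c * δ) (l : ℝ) :
    l * ξ - f l ≤ ξ ^ 2 / (4 * c) := by
  rcases le_total |l| δ with hl | hl
  · calc l * ξ - f l ≤ l * ξ - c * l ^ 2 := by gcongr; exact hquad l hl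
      _ = ξ ^ 2 / (4 * c) - c * (l - ξ / (2 * c)) ^ 2 := by field_simp; ring
      _ ≤ ξ ^ 2 / (4 * c) := sub_le_self _ (by positivity)
  · have hlξ : l * ξ ≤ c * δ * |l| :=
      calc l * ξ ≤ |l| * |ξ| := (le_abs_self _).trans_eq (abs_mul l ξ)
        _ ≤ |l| * (c * δ) := by gcongr
        _ = c * δ * |l| := mul_comm _ _
    have hfl : c * δ * |l| ≤ f l := by
      have h := div_mul_norm_le_of_convexOn (b := c * δ ^ 2) hf hf0 hδ
        (fun x hx => by simpa [← hx] using hquad x hx.le) hl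
      rwa [show c * δ ^ 2 / δ = c * δ by field_simp] at h
    calc l * ξ - f l ≤ 0 := by linarith
      _ ≤ ξ ^ 2 / (4 * c) := by positivity

lemma eventually_forall_mul_sub_le (hf : ConvexOn ℝ Set.univ f) (hf0 : f 0 = 0)
    (hlim : Tendsto (fun l => f l / l ^ 2) (𝓝[≠] 0) (𝓝 (κ / 2))) (hc : 0 < c) (hcκ : c < κ / 2) :
    ∀ᶠ ξ in 𝓝 0, ∀ l, l * ξ - f l ≤ ξ ^ 2 / (4 * c) := by
  have hquad : ∀ᶠ l in 𝓝 0, c * l ^ 2 ≤ f l := by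
    filter_upwards [eventually_nhdsWithin_iff.1 (hlim.eventually_const_le hcκ)] with l hl
    rcases eq_or_ne l 0 with rfl | hl0
    · simp [hf0]
    · exact (le_div_iff₀ (by positivity)).1 (hl hl0)
  obtain ⟨δ, hδ, hball⟩ := Metric.nhds_basis_closedBall.eventually_iff.1 hquad
  filter_upwards [Metric.closedBall_mem_nhds 0 (mul_pos hc hδ)] with ξ hξ
  exact mul_sub_le_of_convexOn_of_quadratic_le hf hf0.le hc hδ
    (fun l hl => hball (mem_closedBall_zero_iff.2 hl)) (mem_closedBall_zero_iff.1 hξ)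

theorem tendsto_legendreTransform_div_sq (hf : ConvexOn ℝ Set.univ f) (hf0 : f 0 = 0)
    (hκ : 0 < κ) (hlim : Tendsto (fun l => f l / l ^ 2) (𝓝[≠] 0) (𝓝 (κ / 2))) :
    Tendsto (fun ξ => legendreTransform f ξ / ξ ^ 2) (𝓝[≠] 0) (𝓝 (1 / (2 * κ))) := by
  have hbound {c : ℝ} (hc : 0 < c) (hcκ : c < κ / 2) :=
    (eventually_forall_mul_sub_le hf hf0 hlim hc hcκ).filter_mono
      (nhdsWithin_le_nhds (s := {0}ᶜ))
  refine tendsto_order.2 ⟨fun a ha => ?_, fun b hb => ?_⟩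
  · -- the maximiser of `l ξ - κ l² / 2` is `l = ξ / κ`
    have hscale := tendsto_div_const_nhdsNE_zero hκ.ne'
    have hκ2 : 0 < κ / 2 := half_pos hκ
    have htest : Tendsto (fun ξ => 1 / κ - f (ξ / κ) / (ξ / κ) ^ 2 * (1 / κ) ^ 2)
        (𝓝[≠] 0) (𝓝 (1 / (2 * κ))) := by
      convert! ((hlim.comp hscale).mul_const ((1 / κ) ^ 2)).const_sub (1 / κ) using 2
      field_simp
      norm_num
    filter_upwards [htest.eventually_const_lt ha, hbound (half_pos hκ2) (half_lt_self hκ2),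
      self_mem_nhdsWithin] with ξ haξ hξ (hξ0 : ξ ≠ 0)
    refine haξ.trans_le ((le_div_iff₀ (by positivity)).2 ?_)
    refine le_trans (le_of_eq ?_) (le_legendreTransform hξ (ξ / κ))
    field_simp
  · have hb0 : 0 < b := lt_trans (by positivity) hb
    obtain ⟨c, hbc, hcκ⟩ : ∃ c, 1 / (4 * b) < c ∧ c < κ / 2 := by
      refine exists_between ?_
      rw [gt_iff_lt, div_lt_iff₀ (by positivity)] at hb
      rw [div_lt_iff₀ (by positivity)]
      linarith
    have hc : 0 < c := lt_trans (by positivity) hbc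
    filter_upwards [hbound hc hcκ, self_mem_nhdsWithin] with ξ hξ (hξ0 : ξ ≠ 0)
    rw [div_lt_iff₀ (by positivity)]
    refine (legendreTransform_le hξ).trans_lt ?_
    rw [div_lt_iff₀ (by positivity)] at hbc ⊢
    have hξ2 : 0 < ξ ^ 2 := by positivity
    nlinarith

end LegendreTransform

section LogOneAdd

lemma abs_log_one_add_le {x : ℝ} (hx : 0 ≤ x) : |log (1 + x)| ≤ x := by
  rw [abs_of_nonneg (log_nonneg (by linarith))]
  linarith [log_le_sub_one_of_pos (show 0 < 1 + x by linarith)]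

lemma tendsto_log_one_add_mul_div (a : ℝ) :
    Tendsto (fun s => log (1 + s * a) / s) (𝓝[≠] 0) (𝓝 a) := by
  have hderiv : HasDerivAt (fun s => log (1 + s * a)) a 0 := by
    simpa using (((hasDerivAt_id (0 : ℝ)).mul_const a).const_add 1).log (by simp)
  refine (hasDerivAt_iff_tendsto_slope.1 hderiv).congr fun s => ?_
  simp [slope_def_field]

variable {α : Type*} [MeasurableSpace α] {μ : Measure α} {g : α → ℝ}

lemma integrable_log_one_add (hg : Integrable g μ) (hg0 : 0 ≤ᵐ[μ] g) :
    Integrable (fun x => log (1 + g x)) μ := by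
  refine hg.mono' ?_ (hg0.mono fun x hx => abs_log_one_add_le hx)
  exact (measurable_log.comp_aemeasurable (hg.aemeasurable.const_add 1)).aestronglyMeasurable

lemma tendsto_integral_log_one_add_mul_div (hg : Integrable g μ) (hg0 : 0 ≤ᵐ[μ] g) :
    Tendsto (fun s => (∫ x, log (1 + s * g x) ∂μ) / s) (𝓝[>] 0) (𝓝 (∫ x, g x ∂μ)) := by
  simp_rw [← integral_div]
  refine tendsto_integral_filter_of_dominated_convergence g ?_ ?_ hg (ae_of_all _ fun x =>
    (tendsto_log_one_add_mul_div (g x)).mono_left (nhdsWithin_mono 0 fun s hs => ne_of_gt hs))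
  · filter_upwards [self_mem_nhdsWithin] with s (hs : 0 < s)
    exact ((integrable_log_one_add (hg.const_mul s)
      (hg0.mono fun x hx => mul_nonneg hs.le hx)).div_const s).aestronglyMeasurable
  · filter_upwards [self_mem_nhdsWithin] with s (hs : 0 < s)
    filter_upwards [hg0] with x hx
    rw [norm_eq_abs, abs_div, abs_of_pos hs, div_le_iff₀ hs, mul_comm (g x)]
    exact abs_log_one_add_le (mul_nonneg hs.le hx)

lemma convexOn_log_one_add_sinh_sq_mul {a : ℝ} (ha0 : 0 ≤ a) (ha2 : a ≤ 2) :
    ConvexOn ℝ Set.univ fun x => log (1 + sinh x ^ 2 * a) := by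
  have hpos (x : ℝ) : 0 < 1 + sinh x ^ 2 * a := by positivity
  have hinner (x : ℝ) :
      HasDerivAt (fun x => 1 + sinh x ^ 2 * a) (2 * sinh x * cosh x * a) x := by
    simpa using (((hasDerivAt_sinh x).pow 2).mul_const a).const_add 1
  have hnum (x : ℝ) : HasDerivAt (fun x => 2 * sinh x * cosh x * a)
      ((2 * cosh x * cosh x + 2 * sinh x * sinh x) * a) x :=
    (((hasDerivAt_sinh x).const_mul 2).mul (hasDerivAt_cosh x)).mul_const a
  refine convexOn_of_hasDerivWithinAt2_nonneg convex_univ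
    (fun x _ => ((hinner x).log (hpos x).ne').continuousAt.continuousWithinAt)
    (fun x _ => ((hinner x).log (hpos x).ne').hasDerivWithinAt)
    (fun x _ => ((hnum x).div (hinner x) (hpos x).ne').hasDerivWithinAt) fun x _ => ?_
  have hnumerator : (2 * cosh x * cosh x + 2 * sinh x * sinh x) * a * (1 + sinh x ^ 2 * a)
      - 2 * sinh x * cosh x * a * (2 * sinh x * cosh x * a)
      = 2 * a * (1 + sinh x ^ 2 * (2 - a)) := by
    linear_combination (2 * a - 2 * a ^ 2 * sinh x ^ 2) * cosh_sq x
  rw [hnumerator]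
  have : 0 ≤ 2 - a := sub_nonneg.2 ha2
  positivity

end LogOneAdd

section TailIntegral

lemma hasDerivAt_integral_Ioi {E : Type*} [NormedAddCommGroup E] [NormedSpace ℝ E]
    [CompleteSpace E] {f : ℝ → E} {x : ℝ} (hf : Integrable f) (hfx : ContinuousAt f x) :
    HasDerivAt (fun y => ∫ u in Set.Ioi y, f u) (-f x) x := by
  have hsplit : (fun y => ∫ u in Set.Ioi y, f u)
      = fun y => (∫ u in Set.Ioi x, f u) - ∫ u in x..y, f u :=
    funext fun y => eq_sub_of_add_eq' <|
      intervalIntegral.integral_interval_add_Ioi hf.integrableOn hf.integrableOn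
  rw [hsplit]
  exact (intervalIntegral.integral_hasDerivAt_right hf.intervalIntegrable
    hf.aestronglyMeasurable.stronglyMeasurableAtFilter hfx).const_sub _

lemma tendsto_mul_integral_Ioi_atTop {f : ℝ → ℝ} (hf : Integrable fun u => u * f u) :
    Tendsto (fun x => x * ∫ u in Set.Ioi x, f u) atTop (𝓝 0) := by
  have htail := tendsto_integral_Ioi_zero (f := fun u => ‖u * f u‖) (μ := volume) tendsto_id
  refine squeeze_zero_norm' ?_ htail
  filter_upwards [eventually_ge_atTop 0] with x hx
  rw [← integral_const_mul]
  refine (norm_integral_le_integral_norm _).trans ?_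
  refine integral_mono_of_nonneg (ae_of_all _ fun _ => norm_nonneg _) hf.norm.integrableOn ?_
  filter_upwards [ae_restrict_mem measurableSet_Ioi] with u (hu : x < u)
  simp only [norm_mul]
  gcongr
  simpa [abs_of_nonneg hx] using hu.le.trans (le_abs_self u)

end TailIntegral

section Erfc

lemma integrable_exp_neg_sq : Integrable fun u : ℝ => exp (-u ^ 2) := by
  simpa using integrable_exp_neg_mul_sq one_pos

lemma hasDerivAt_exp_neg_sq (x : ℝ) :
    HasDerivAt (fun u : ℝ => exp (-u ^ 2)) (exp (-x ^ 2) * (-(2 * x))) x := by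
  simpa using ((hasDerivAt_pow 2 x).neg).exp

lemma hasDerivAt_erfc (x : ℝ) : HasDerivAt erfc (2 / √π * -exp (-x ^ 2)) x :=
  (hasDerivAt_integral_Ioi integrable_exp_neg_sq
    (hasDerivAt_exp_neg_sq x).continuousAt).const_mul (2 / √π)

lemma continuous_erfc : Continuous erfc :=
  continuous_iff_continuousAt.2 fun x => (hasDerivAt_erfc x).continuousAt

lemma erfc_neg (x : ℝ) : erfc (-x) = 2 - erfc x := by
  have hreflect : ∫ u in Set.Ioi (-x), exp (-u ^ 2) = ∫ u in Set.Iic x, exp (-u ^ 2) := by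
    rw [← integral_comp_neg_Iic]
    simp only [neg_sq]
  have htotal : (∫ u in Set.Iic x, exp (-u ^ 2)) + ∫ u in Set.Ioi x, exp (-u ^ 2) = √π := by
    rw [intervalIntegral.integral_Iic_add_Ioi integrable_exp_neg_sq.integrableOn
      integrable_exp_neg_sq.integrableOn]
    simpa using integral_gaussian 1
  rw [erfc, erfc, hreflect, eq_sub_iff_add_eq, ← mul_add, htotal,
    div_mul_cancel₀ _ (by positivity)]

lemma erfc_zero : erfc 0 = 1 := by
  have h := erfc_neg 0
  rw [neg_zero] at h
  linarith

lemma erfc_nonneg (x : ℝ) : 0 ≤ erfc x :=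
  mul_nonneg (by positivity) (integral_nonneg fun _ => (exp_pos _).le)

lemma tendsto_erfc_atTop : Tendsto erfc atTop (𝓝 0) := by
  have h := (tendsto_integral_Ioi_zero (f := fun u : ℝ => exp (-u ^ 2)) (μ := volume)
    tendsto_id).const_mul (2 / √π)
  rwa [mul_zero] at h

lemma tendsto_mul_erfc_atTop : Tendsto (fun x => x * erfc x) atTop (𝓝 0) := by
  have hintegrable : Integrable fun u : ℝ => u * exp (-u ^ 2) := by
    simpa using integrable_mul_exp_neg_mul_sq one_pos
  have h := (tendsto_mul_integral_Ioi_atTop hintegrable).const_mul (2 / √π)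
  rw [mul_zero] at h
  exact h.congr fun x => mul_left_comm _ _ _

lemma erfc_mul_erfc_neg_nonneg (x : ℝ) : 0 ≤ erfc x * erfc (-x) :=
  mul_nonneg (erfc_nonneg x) (erfc_nonneg (-x))

lemma erfc_mul_erfc_neg_le_one (x : ℝ) : erfc x * erfc (-x) ≤ 1 := by
  rw [erfc_neg]
  linarith [sq_nonneg (1 - erfc x)]

/-- A primitive of `erfc(x) erfc(-x)`, obtained by integrating by parts twice; it vanishes at
infinity. -/
noncomputable def erfcMulPrimitive (x : ℝ) : ℝ :=
  x * (erfc x * (2 - erfc x)) - 2 / √π * (exp (-x ^ 2) * (1 - erfc x)) - √2 / √π * erfc (√2 * x)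

lemma hasDerivAt_erfcMulPrimitive (x : ℝ) :
    HasDerivAt erfcMulPrimitive (erfc x * erfc (-x)) x := by
  have herfc := hasDerivAt_erfc x
  have hproduct : HasDerivAt (fun x => erfc x * (2 - erfc x))
      (2 / √π * -exp (-x ^ 2) * (2 - erfc x) + erfc x * -(2 / √π * -exp (-x ^ 2))) x :=
    herfc.mul (herfc.const_sub 2)
  have hscaled : HasDerivAt (fun x => erfc (√2 * x)) (2 / √π * -exp (-(√2 * x) ^ 2) * √2) x :=
    (hasDerivAt_erfc (√2 * x)).comp x (hasDerivAt_const_mul √2)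
  have hexp : exp (-(√2 * x) ^ 2) = exp (-x ^ 2) * exp (-x ^ 2) := by
    rw [mul_pow, sq_sqrt zero_le_two, ← exp_add]
    ring_nf
  have hsq : √2 ^ 2 = (2 : ℝ) := sq_sqrt zero_le_two
  refine ((((hasDerivAt_id x).mul hproduct).sub
    (((hasDerivAt_exp_neg_sq x).mul (herfc.const_sub 1)).const_mul (2 / √π))).sub
    (hscaled.const_mul (√2 / √π))).congr_deriv ?_
  rw [erfc_neg, hexp, id]
  linear_combination (2 / √π ^ 2 * exp (-x ^ 2) ^ 2) * hsq

lemma erfcMulPrimitive_zero : erfcMulPrimitive 0 = -√(2 / π) := by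
  simp [erfcMulPrimitive, erfc_zero]

lemma tendsto_erfcMulPrimitive_atTop : Tendsto erfcMulPrimitive atTop (𝓝 0) := by
  have hboundary : Tendsto (fun x => x * (erfc x * (2 - erfc x))) atTop (𝓝 0) := by
    have h := tendsto_mul_erfc_atTop.mul (tendsto_erfc_atTop.const_sub 2)
    rw [zero_mul] at h
    exact h.congr fun x => mul_assoc _ _ _
  have hexp : Tendsto (fun x : ℝ => exp (-x ^ 2)) atTop (𝓝 0) :=
    tendsto_exp_neg_atTop_nhds_zero.comp (tendsto_pow_atTop two_ne_zero)
  have hscaled : Tendsto (fun x => erfc (√2 * x)) atTop (𝓝 0) :=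
    tendsto_erfc_atTop.comp (tendsto_id.const_mul_atTop (by positivity))
  have h := (hboundary.sub ((hexp.mul (tendsto_erfc_atTop.const_sub 1)).const_mul
    (2 / √π))).sub (hscaled.const_mul (√2 / √π))
  rwa [zero_mul, mul_zero, mul_zero, sub_zero, sub_zero] at h

lemma integrableOn_erfc_mul_erfc_neg :
    IntegrableOn (fun x => erfc x * erfc (-x)) (Set.Ioi 0) :=
  integrableOn_Ioi_deriv_of_nonneg' (fun x _ => hasDerivAt_erfcMulPrimitive x)
    (fun x _ => erfc_mul_erfc_neg_nonneg x) tendsto_erfcMulPrimitive_atTop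

lemma integral_erfc_mul_erfc_neg : ∫ x in Set.Ioi 0, erfc x * erfc (-x) = √(2 / π) := by
  rw [integral_Ioi_of_hasDerivAt_of_nonneg' (fun x _ => hasDerivAt_erfcMulPrimitive x)
    (fun x _ => erfc_mul_erfc_neg_nonneg x) tendsto_erfcMulPrimitive_atTop,
    erfcMulPrimitive_zero, zero_sub, neg_neg]

end Erfc

section Quenched

variable {ρ σ : ℝ}

lemma mq_zero (ρ σ : ℝ) : mq ρ σ 0 = 0 := by simp [mq]

lemma mq_eq (ρ σ : ℝ) : mq ρ σ = fun l => ρ * σ *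
    ∫ η in Set.Ioi 0, log (1 + sinh (l / (2 * ρ)) ^ 2 * (erfc η * erfc (-η))) := by
  simp only [funext_iff, mq, mul_assoc, implies_true]

lemma convexOn_mq (h : 0 ≤ ρ * σ) : ConvexOn ℝ Set.univ (mq ρ σ) := by
  have hconv (η : ℝ) : ConvexOn ℝ Set.univ
      fun l => log (1 + sinh (l / (2 * ρ)) ^ 2 * (erfc η * erfc (-η))) := by
    simpa only [div_eq_mul_inv] using!
      (convexOn_log_one_add_sinh_sq_mul (erfc_mul_erfc_neg_nonneg η)
        ((erfc_mul_erfc_neg_le_one η).trans one_le_two)).comp_linearMap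
        (LinearMap.mulRight ℝ (2 * ρ)⁻¹)
  have hintegrable (l : ℝ) : IntegrableOn
      (fun η => log (1 + sinh (l / (2 * ρ)) ^ 2 * (erfc η * erfc (-η)))) (Set.Ioi 0) :=
    integrable_log_one_add (integrableOn_erfc_mul_erfc_neg.const_mul _)
      (ae_of_all _ fun η => mul_nonneg (sq_nonneg _) (erfc_mul_erfc_neg_nonneg η))
  rw [mq_eq]
  exact (integral_convexOn_of_integrand_ae convex_univ (ae_of_all _ hconv)
    fun l _ => hintegrable l).smul h

lemma tendsto_mq_div_sq (σ : ℝ) (hρ : ρ ≠ 0) :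
    Tendsto (fun l => mq ρ σ l / l ^ 2) (𝓝[≠] 0) (𝓝 (σ / (ρ * √(2 * π)) / 2)) := by
  have hscale := tendsto_div_const_nhdsNE_zero (show 2 * ρ ≠ 0 by positivity)
  have hsinh : Tendsto (fun x => sinh x ^ 2) (𝓝[≠] 0) (𝓝[>] 0) := by
    refine tendsto_nhdsWithin_iff.2 ⟨?_, ?_⟩
    · exact (Continuous.tendsto' (by fun_prop) 0 0 (by simp)).mono_left nhdsWithin_le_nhds
    · filter_upwards [self_mem_nhdsWithin] with x hx
      exact sq_pos_of_ne_zero (sinh_ne_zero.2 hx)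
  have hvariance : σ / (4 * ρ) * √(2 / π) = σ / (ρ * √(2 * π)) / 2 := by
    have hsq : √2 ^ 2 = (2 : ℝ) := sq_sqrt zero_le_two
    rw [sqrt_div zero_le_two, sqrt_mul zero_le_two]
    field_simp
    linear_combination 2 * σ * hsq
  have hintegral := (tendsto_integral_log_one_add_mul_div integrableOn_erfc_mul_erfc_neg
    (ae_of_all _ erfc_mul_erfc_neg_nonneg)).comp (hsinh.comp hscale)
  have h := (hintegral.mul ((tendsto_sinh_div.comp hscale).pow 2)).const_mul (σ / (4 * ρ))
  rw [integral_erfc_mul_erfc_neg, one_pow, mul_one, hvariance] at h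
  refine h.congr' ?_
  filter_upwards [self_mem_nhdsWithin] with l (hl : l ≠ 0)
  have : sinh (l / (2 * ρ)) ≠ 0 := sinh_ne_zero.2 (by positivity)
  simp only [mq_eq, Function.comp_apply]
  field_simp
  norm_num

end Quenched

/-- `lim_{ξ→0} φ_q(ξ)/ξ² = ρ√(2π)/(2σ)`: the quadratic behaviour of the quenched
large deviation function, encoding the quenched variance `σ/(ρ√(2π))`. -/
theorem quenched_ldf_quadratic (ρ σ : ℝ) (hρ : 0 < ρ) (hσ : 0 < σ) :
    Tendsto (fun ξ : ℝ => φq ρ σ ξ / ξ ^ 2) (𝓝[≠] 0)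
      (nhds (ρ * Real.sqrt (2 * π) / (2 * σ))) := by
  have hlimit : ρ * √(2 * π) / (2 * σ) = 1 / (2 * (σ / (ρ * √(2 * π)))) := by field_simp
  rw [hlimit]
  exact tendsto_legendreTransform_div_sq (convexOn_mq (by positivity)) (mq_zero ρ σ)
    (by positivity) (tendsto_mq_div_sq σ hρ.ne')
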